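/- arXiv:2202.13719 — 2 statements merged into one kernel-verified Lean document; each statement's English description precedes it below -/
import Mathlib

section
/- Let V be a finite set and let 𝒯 be a finite family of 3-element subsets of V (an 'abstract triangulation') with |𝒯| = N ≥ 2. Define the dual graph on 𝒯 by making distinct members T, T' adjacent if and only if |T ∩ T'| = 2. Assume that (i) the dual graph is connected, and (ii) every 2-element subset of V is contained in at most 2 members of 𝒯. Then there exists a subset G ⊆ V with |G| ≤ ⌊N/2⌋ such that every member of 𝒯 contains at least one element of G, and the simple graph on G in which two distinct elements g, g' are adjacent if and only if some member of 𝒯 contains both g and g' is connected. -/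
/-!
Two sides of a triangle share a vertex, so three triangles that form a path in the dual graph have
a common vertex. A connected graph with at least three vertices contains a path on three vertices
two of which, `a` and `b`, can be removed together without disconnecting the graph: take for `a` a
vertex farthest from a root, let `p` be a neighbour of `a` one step closer to the root, and take for
`b` another farthest neighbour of `p` if there is one, and `p` itself otherwise. If more than one
triangle remains, those left have a cooperative guard set by induction. The common vertex of the
path guards `a` and `b`, and it sees the guards of the third triangle of the path. So every two
triangles cost one guard.
-/

open Finset

theorem inter_inter_nonempty_of_card_inter_eq_two {V : Type*} [DecidableEq V] {A B C : Finset V}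
    (hB : #B ≤ 3) (hAB : #(A ∩ B) = 2) (hBC : #(B ∩ C) = 2) : (A ∩ B ∩ C).Nonempty := by
  have h := inter_nonempty_of_card_lt_card_add_card (s := B) (t := A ∩ B) (u := B ∩ C)
    inter_subset_right inter_subset_left (by omega)
  exact h.mono fun x hx => by simp_all

section Connectivity

variable {α : Type*} {H : SimpleGraph α}

theorem induce_fromRel (r : α → α → Prop) (s : Set α) :
    (SimpleGraph.fromRel r).induce s = SimpleGraph.fromRel fun a b : s => r a b := by
  ext a b
  simp [Subtype.ext_iff]

theorem connected_induce_of_forall_exists_adj_lt {β : Type*} [LT β] [WellFoundedLT β]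
    {s : Set α} {r : α} (hr : r ∈ s) (f : α → β)
    (hf : ∀ x ∈ s, x ≠ r → ∃ y ∈ s, H.Adj x y ∧ f y < f x) : (H.induce s).Connected := by
  rw [SimpleGraph.connected_iff_exists_forall_reachable]
  refine ⟨⟨r, hr⟩, fun x => ?_⟩
  induction hn : f x using WellFoundedLT.induction generalizing x with
  | ind n ih =>
    by_cases hxr : x.1 = r
    · exact (Subtype.ext hxr : x = ⟨r, hr⟩) ▸ .refl _
    · obtain ⟨y, hy, hxy, hlt⟩ := hf x x.2 hxr
      have hyx : (H.induce s).Adj ⟨y, hy⟩ x := hxy.symm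
      exact (ih (f y) (hn ▸ hlt) ⟨y, hy⟩ rfl).trans hyx.reachable

theorem exists_adj_dist_eq_dist_add_one (hH : H.Connected) {r x : α} (hx : x ≠ r) :
    ∃ y, H.Adj x y ∧ H.dist x r = H.dist y r + 1 := by
  obtain ⟨p, hp⟩ := hH.exists_walk_length_eq_dist x r
  cases p with
  | nil => exact absurd rfl hx
  | @cons _ y _ hxy q =>
    refine ⟨y, hxy, ?_⟩
    have hq : H.dist y r ≤ q.length := SimpleGraph.dist_le q
    have htriangle := hH.dist_triangle (u := x) (v := y) (w := r)
    rw [SimpleGraph.dist_eq_one_iff_adj.mpr hxy] at htriangle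
    rw [SimpleGraph.Walk.length_cons] at hp
    omega

theorem connected_induce_compl_pair_of_farthest (hH : H.Connected) {r a b : α} (ha : a ≠ r)
    (hmax : ∀ x, H.dist x r ≤ H.dist a r) (hab : H.dist b r = H.dist a r) :
    (H.induce {a, b}ᶜ).Connected := by
  have hb : b ≠ r := by
    rintro rfl
    exact ha (hH.dist_eq_zero_iff.mp (by simpa using hab.symm))
  refine connected_induce_of_forall_exists_adj_lt (r := r) (by simp [ha.symm, hb.symm])
    (H.dist · r) fun x _ hxr => ?_
  obtain ⟨y, hxy, hdist⟩ := exists_adj_dist_eq_dist_add_one hH hxr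
  have hx := hmax x
  refine ⟨y, ?_, hxy, by omega⟩
  rintro (rfl | rfl) <;> omega

theorem connected_induce_compl_pair_of_farthest_of_only_child (hH : H.Connected) {r a p : α}
    (hp : p ≠ r) (hmax : ∀ x, H.dist x r ≤ H.dist a r)
    (honly : ∀ x ≠ a, H.dist x r = H.dist p r + 1 → ¬ H.Adj x p) :
    (H.induce {a, p}ᶜ).Connected := by
  have ha : a ≠ r := by
    rintro rfl
    exact hp (hH.dist_eq_zero_iff.mp (by simpa using hmax p))
  refine connected_induce_of_forall_exists_adj_lt (r := r) (by simp [ha.symm, hp.symm])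
    (H.dist · r) fun x hx hxr => ?_
  obtain ⟨y, hxy, hdist⟩ := exists_adj_dist_eq_dist_add_one hH hxr
  refine ⟨y, ?_, hxy, by omega⟩
  rintro (rfl | rfl)
  · have := hmax x
    omega
  · exact honly x (fun h => hx (.inl h)) hdist hxy

theorem exists_path_connected_induce_compl_pair [Finite α] (hH : H.Connected)
    (hα : 3 ≤ Nat.card α) :
    ∃ a b c, a ≠ b ∧ a ≠ c ∧ (H.Adj a b ∨ H.Adj a c) ∧ H.Adj b c ∧
      (H.induce {a, b}ᶜ).Connected := by
  have hcard : 3 ≤ ENat.card α := by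
    rw [ENat.card_eq_coe_natCard]
    exact_mod_cast hα
  have : Nontrivial α := Finite.one_lt_card_iff_nontrivial.mp (by omega)
  obtain ⟨r⟩ := hH.nonempty
  obtain ⟨a, hmax⟩ := Finite.exists_max (H.dist · r)
  have har : a ≠ r := by
    rintro rfl
    obtain ⟨x, hx⟩ := exists_ne a
    exact hx (hH.dist_eq_zero_iff.mp (by simpa using hmax x))
  obtain ⟨p, hap, hp⟩ := exists_adj_dist_eq_dist_add_one hH har
  by_cases hsibling : ∃ b ≠ a, H.dist b r = H.dist p r + 1 ∧ H.Adj b p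
  · obtain ⟨b, hba, hb, hbp⟩ := hsibling
    exact ⟨a, b, p, hba.symm, hap.ne, .inr hap, hbp,
      connected_induce_compl_pair_of_farthest hH har hmax (hb.trans hp.symm)⟩
  push Not at hsibling
  have hpr : p ≠ r := by
    rintro rfl
    obtain ⟨b, hba, hbp⟩ := ENat.exists_ne_ne_of_three_le hcard a p
    have hb : H.dist b p = 1 := by
      have hpos := hH.pos_dist_of_ne hbp
      have hle := hmax b
      rw [SimpleGraph.dist_self] at hp
      omega
    exact hsibling b hba (by simpa using hb) (SimpleGraph.dist_eq_one_iff_adj.mp hb)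
  obtain ⟨q, hpq, hq⟩ := exists_adj_dist_eq_dist_add_one hH hpr
  refine ⟨a, p, q, hap.ne, ?_, .inl hap, hpq,
    connected_induce_compl_pair_of_farthest_of_only_child hH hpr hmax hsibling⟩
  rintro rfl
  omega

end Connectivity

section Guards

variable {ι V : Type*} {t : ι → Set V}

/-- The graph on the points of a family of sets in which two points see each other when they lie
in a common member of the family. -/
def visibilityGraph (t : ι → Set V) : SimpleGraph V :=
  SimpleGraph.fromRel fun g g' => ∃ i, g ∈ t i ∧ g' ∈ t i

/-- A cooperative guard set of a family of sets: a set of points (guards) that meets every member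
of the family and is connected under mutual visibility. -/
structure IsCooperativeGuardSet (t : ι → Set V) (G : Set V) : Prop where
  inter_nonempty : ∀ i, (G ∩ t i).Nonempty
  connected : ((visibilityGraph t).induce G).Connected

theorem visibilityGraph_adj {g g' : V} :
    (visibilityGraph t).Adj g g' ↔ g ≠ g' ∧ ∃ i, g ∈ t i ∧ g' ∈ t i := by
  simp only [visibilityGraph, SimpleGraph.fromRel_adj, and_comm (a := g' ∈ t _), or_self]

theorem visibilityGraph_comp_le {κ : Type*} (t : ι → Set V) (f : κ → ι) :
    visibilityGraph (t ∘ f) ≤ visibilityGraph t := by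
  intro g g' h
  obtain ⟨hne, i, hi⟩ := visibilityGraph_adj.mp h
  exact visibilityGraph_adj.mpr ⟨hne, f i, hi⟩

theorem isCooperativeGuardSet_singleton {g : V} (hg : ∀ i, g ∈ t i) :
    IsCooperativeGuardSet t {g} where
  inter_nonempty i := ⟨g, rfl, hg i⟩
  connected := .of_subsingleton

theorem IsCooperativeGuardSet.insert {s : Set ι} {G : Set V}
    (hG : IsCooperativeGuardSet (fun i : s => t i) G) {c : ι} (hc : c ∈ s) {g : V}
    (hgc : g ∈ t c) (hg : ∀ i ∉ s, g ∈ t i) : IsCooperativeGuardSet t (insert g G) where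
  inter_nonempty i := by
    by_cases hi : i ∈ s
    · exact (hG.inter_nonempty ⟨i, hi⟩).mono (by gcongr; exact Set.subset_insert g G)
    · exact ⟨g, Set.mem_insert g G, hg i hi⟩
  connected := by
    obtain ⟨g', hg'G, hg'c⟩ := hG.inter_nonempty ⟨c, hc⟩
    have hconn : ((visibilityGraph t).induce G).Connected :=
      hG.connected.mono (SimpleGraph.comap_monotone _ (visibilityGraph_comp_le t Subtype.val))
    rcases eq_or_ne g g' with rfl | hne
    · rwa [Set.insert_eq_of_mem hg'G]
    · have hadj : (visibilityGraph t).Adj g g' :=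
        visibilityGraph_adj.mpr ⟨hne, c, hgc, hg'c⟩
      exact SimpleGraph.connected_induce_union (s := {g}) .of_subsingleton hconn.preconnected rfl
        hg'G hadj

theorem exists_common_mem_connected_induce_compl_pair [Finite ι] {H : SimpleGraph ι}
    (hH : H.Connected) (hι : 3 ≤ Nat.card ι)
    (hpath : ∀ ⦃i j k⦄, H.Adj i j → H.Adj j k → (t i ∩ t j ∩ t k).Nonempty) :
    ∃ a b c g, a ≠ b ∧ a ≠ c ∧ b ≠ c ∧ g ∈ t a ∧ g ∈ t b ∧ g ∈ t c ∧
      (H.induce {a, b}ᶜ).Connected := by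
  obtain ⟨a, b, c, hab, hac, hadj | hadj, hbc, hconn⟩ :=
    exists_path_connected_induce_compl_pair hH hι
  · obtain ⟨g, ⟨hga, hgb⟩, hgc⟩ := hpath hadj hbc
    exact ⟨a, b, c, g, hab, hac, hbc.ne, hga, hgb, hgc, hconn⟩
  · obtain ⟨g, ⟨hga, hgc⟩, hgb⟩ := hpath hadj hbc.symm
    exact ⟨a, b, c, g, hab, hac, hbc.ne, hga, hgb, hgc, hconn⟩

theorem exists_forall_mem_of_card_le_three [Finite ι] [Nontrivial ι] {H : SimpleGraph ι}
    (hH : H.Connected) (hι : Nat.card ι ≤ 3)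
    (hpath : ∀ ⦃i j k⦄, H.Adj i j → H.Adj j k → (t i ∩ t j ∩ t k).Nonempty) :
    ∃ g, ∀ i, g ∈ t i := by
  have eq_univ {s : Set ι} (hs : Nat.card ι ≤ s.ncard) : s = Set.univ :=
    of_not_not fun h => (Set.ncard_lt_card h).not_ge hs
  obtain hlt | heq := hι.lt_or_eq
  · obtain ⟨a⟩ := hH.nonempty
    obtain ⟨b, hab⟩ := hH.preconnected.exists_adj_of_nontrivial a
    obtain ⟨g, ⟨hga, hgb⟩, -⟩ := hpath hab hab.symm
    have huniv : {a, b} = Set.univ := eq_univ (by rw [Set.ncard_pair hab.ne]; omega)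
    refine ⟨g, fun i => ?_⟩
    obtain rfl | rfl := huniv.ge (Set.mem_univ i) <;> assumption
  · obtain ⟨a, b, c, g, hab, hac, hbc, hga, hgb, hgc, -⟩ :=
      exists_common_mem_connected_induce_compl_pair hH heq.ge hpath
    have huniv : {a, b, c} = Set.univ :=
      eq_univ (heq.trans_le (Set.ncard_eq_three.mpr ⟨a, b, c, hab, hac, hbc, rfl⟩).ge)
    refine ⟨g, fun i => ?_⟩
    obtain rfl | rfl | rfl := huniv.ge (Set.mem_univ i) <;> assumption

theorem exists_isCooperativeGuardSet [Finite ι] [Nontrivial ι] {H : SimpleGraph ι}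
    (hH : H.Connected)
    (hpath : ∀ ⦃i j k⦄, H.Adj i j → H.Adj j k → (t i ∩ t j ∩ t k).Nonempty) :
    ∃ G : Finset V, 2 * #G ≤ Nat.card ι ∧ IsCooperativeGuardSet t (G : Set V) := by
  classical
  induction hn : Nat.card ι using Nat.strong_induction_on generalizing ι with
  | h n ih =>
    obtain hle | hlt := le_or_gt n 3
    · obtain ⟨g, hg⟩ := exists_forall_mem_of_card_le_three hH (hn.trans_le hle) hpath
      have hn1 : 1 < n := hn ▸ Finite.one_lt_card
      exact ⟨{g}, by simpa, by simpa using isCooperativeGuardSet_singleton hg⟩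
    · obtain ⟨a, b, c, g, hab, hac, hbc, hga, hgb, hgc, hconn⟩ :=
        exists_common_mem_connected_induce_compl_pair hH (by omega) hpath
      have hcard : Nat.card ({a, b}ᶜ : Set ι) + 2 = n := by
        rw [← hn, ← Set.ncard_compl_add_ncard {a, b}, Set.ncard_pair hab, Nat.card_coe_set_eq]
      have : Nontrivial ({a, b}ᶜ : Set ι) := Finite.one_lt_card_iff_nontrivial.mp (by omega)
      obtain ⟨G, hG, hguard⟩ := ih _ (by omega) hconn
        (t := fun i : ({a, b}ᶜ : Set ι) => t i) (fun _ _ _ h h' => hpath h h') rfl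
      have hg : ∀ i ∉ ({a, b}ᶜ : Set ι), g ∈ t i := fun i hi => by
        obtain rfl | rfl := not_not.mp hi <;> assumption
      have hc : c ∈ ({a, b}ᶜ : Set ι) := by simp [hac.symm, hbc.symm]
      refine ⟨insert g G, ?_, by simpa using hguard.insert hc hgc hg⟩
      have := card_insert_le g G
      omega

end Guards

theorem cooperative_guards_abstract_general {V : Type*} [DecidableEq V] (𝒯 : Finset (Finset V))
    (hcard : ∀ T ∈ 𝒯, #T ≤ 3) (h𝒯 : 2 ≤ #𝒯)
    (hdual : (SimpleGraph.fromRel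
      (fun T T' : {T // T ∈ 𝒯} => #((T : Finset V) ∩ (T' : Finset V)) = 2)).Connected) :
    ∃ G : Finset V, #G ≤ #𝒯 / 2 ∧
      (∀ T ∈ 𝒯, ∃ g ∈ G, g ∈ T) ∧
      (SimpleGraph.fromRel
        (fun g g' : {g // g ∈ G} =>
          ∃ T ∈ 𝒯, (g : V) ∈ T ∧ (g' : V) ∈ T)).Connected := by
  have : Nontrivial {T // T ∈ 𝒯} := (one_lt_card_iff_nontrivial.mp h𝒯).coe_sort
  obtain ⟨G, hG, hguard⟩ := exists_isCooperativeGuardSet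
    (t := fun T : {T // T ∈ 𝒯} => (T : Set V)) hdual fun A B C hAB hBC => by
      simp only [SimpleGraph.fromRel_adj, inter_comm (B : Finset V) A,
        inter_comm (C : Finset V) B, or_self] at hAB hBC
      exact_mod_cast inter_inter_nonempty_of_card_inter_eq_two (hcard B B.2) hAB.2 hBC.2
  refine ⟨G, ?_, fun T hT => hguard.inter_nonempty ⟨T, hT⟩, ?_⟩
  · rw [Nat.card_eq_fintype_card, Fintype.card_coe] at hG
    omega
  · have := hguard.connected
    simp only [visibilityGraph, induce_fromRel, Subtype.exists, exists_prop, mem_coe] at this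
    exact this

/-- Combinatorial core of Theorem 1: given an abstract triangulation `𝒯` (a family
of 3-element subsets of a finite vertex set `V`) with `N ≥ 2` triangles, connected
dual graph (triangles adjacent iff they share exactly 2 vertices), and every
2-element subset contained in at most 2 triangles, there is a set `G` of at most
`⌊N/2⌋` vertices hitting every triangle whose mutual-visibility graph (two guards
adjacent iff they lie in a common triangle) is connected. -/
theorem cooperative_guards_abstract
    {V : Type*} [Fintype V] [DecidableEq V]
    (𝒯 : Finset (Finset V)) (N : ℕ)
    (hcard3 : ∀ T ∈ 𝒯, T.card = 3)
    (hN : 𝒯.card = N) (hN2 : 2 ≤ N)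
    (hdual : (SimpleGraph.fromRel
      (fun T T' : {T // T ∈ 𝒯} => ((T : Finset V) ∩ (T' : Finset V)).card = 2)).Connected)
    (hside : ∀ s : Finset V, s.card = 2 → (𝒯.filter (fun T => s ⊆ T)).card ≤ 2) :
    ∃ G : Finset V, G.card ≤ N / 2 ∧
      (∀ T ∈ 𝒯, ∃ g ∈ G, g ∈ T) ∧
      (SimpleGraph.fromRel
        (fun g g' : {g // g ∈ G} =>
          ∃ T ∈ 𝒯, (g : V) ∈ T ∧ (g' : V) ∈ T)).Connected :=
  hN ▸ cooperative_guards_abstract_general 𝒯 (fun T hT => (hcard3 T hT).le) (hN ▸ hN2) hdual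
end

section
/- Let G be a finite simple graph on a vertex set V with |V| = N ≥ 2, and suppose G is a tree (connected and acyclic) in which every vertex has degree at most 3. Call a nonempty subset S ⊆ V a 'triplet' if |S| ≤ 3 and there exists a center c ∈ S such that every element of S other than c is adjacent to c in G. Then there exists a finite family F of triplets such that: (i) every vertex of V belongs to at least one member of F; (ii) the intersection graph of F — whose vertices are the members of F, with distinct members S, S' adjacent if and only if S ∩ S' ≠ ∅ — is connected; and (iii) |F| ≤ ⌊N/2⌋. -/
/-- A `triplet` in a graph `G` is a nonempty set of at most 3 vertices having a
center `c` adjacent to every other element of the set. -/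
def IsTriplet {V : Type*} [DecidableEq V] (G : SimpleGraph V) (S : Finset V) : Prop :=
  S.Nonempty ∧ S.card ≤ 3 ∧ ∃ c ∈ S, ∀ x ∈ S, x ≠ c → G.Adj c x

/-!
Fix a root `r`, grow a breadth-first search tree from it and remove vertices from the bottom. A
deepest vertex `v` has no children. If its parent `p` has a second child `w`, then `w` is childless
as well, and the triplet `{p, v, w}` pays for the removal of `v` and `w`. Otherwise `v` is the only
child of `p`, and the triplet `{p, v, q}`, where `q` is the parent of `p`, pays for the removal of
`v` and `p`. Each triplet removes two vertices and meets the vertices that remain, so it also meets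
a triplet of any cover of them. The process stops at two or three vertices, which form one triplet.
-/

/-- The intersection graph of all finite subsets of `α`: two of them are adjacent when they are
distinct and meet. The intersection graph of a family is an induced subgraph of it. -/
def intersectionGraph (α : Type*) [DecidableEq α] : SimpleGraph (Finset α) :=
  SimpleGraph.fromRel fun A B => (A ∩ B).Nonempty

lemma intersectionGraph_adj {α : Type*} [DecidableEq α] {A B : Finset α} :
    (intersectionGraph α).Adj A B ↔ A ≠ B ∧ (A ∩ B).Nonempty := by
  simp [intersectionGraph, Finset.inter_comm B A]

lemma induce_intersectionGraph {α : Type*} [DecidableEq α] (F : Set (Finset α)) :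
    (intersectionGraph α).induce F =
      SimpleGraph.fromRel fun A B : F => ((A : Finset α) ∩ (B : Finset α)).Nonempty := by
  ext A B
  simp [intersectionGraph, Subtype.ext_iff]

lemma connected_induce_intersectionGraph_insert {α : Type*} [DecidableEq α]
    {F : Set (Finset α)} {A B : Finset α}
    (hF : ((intersectionGraph α).induce F).Connected) (hB : B ∈ F) (hAB : (A ∩ B).Nonempty) :
    ((intersectionGraph α).induce (insert A F)).Connected := by
  obtain rfl | hne := eq_or_ne A B
  · rwa [Set.insert_eq_of_mem hB]
  · rw [Set.insert_eq]
    exact SimpleGraph.connected_induce_union SimpleGraph.Preconnected.of_subsingleton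
      hF.preconnected (Set.mem_singleton A) hB (intersectionGraph_adj.2 ⟨hne, hAB⟩)

section TripletCover

variable {V : Type*} [DecidableEq V] {G : SimpleGraph V} {S T : Finset V}

lemma isTriplet_of_adj_of_adj {c a b : V} (ha : G.Adj c a) (hb : G.Adj c b) :
    IsTriplet G {c, a, b} :=
  ⟨⟨c, by simp⟩, Finset.card_le_three, c, by simp, by simp [ha, hb]⟩

/-- `F` is a family of triplets that covers `S` and has a connected intersection graph. The members
of `F` may contain vertices outside `S`. -/
structure IsTripletCover (G : SimpleGraph V) (S : Finset V) (F : Finset (Finset V)) : Prop where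
  isTriplet : ∀ A ∈ F, IsTriplet G A
  exists_mem : ∀ v ∈ S, ∃ A ∈ F, v ∈ A
  connected : ((intersectionGraph V).induce (F : Set (Finset V))).Connected

namespace IsTripletCover

lemma singleton (hS : IsTriplet G S) : IsTripletCover G S {S} where
  isTriplet := by simpa using hS
  exists_mem := by simp
  connected := by
    rw [Finset.coe_singleton, SimpleGraph.induce_singleton_eq_top]
    exact SimpleGraph.connected_top

lemma insert {A : Finset V} {F : Finset (Finset V)} (hF : IsTripletCover G T F)
    (hA : IsTriplet G A) (hAT : (A ∩ T).Nonempty) :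
    IsTripletCover G (A ∪ T) (insert A F) where
  isTriplet := Finset.forall_mem_insert .. |>.2 ⟨hA, hF.isTriplet⟩
  exists_mem v hv := by
    obtain hvA | hvT := Finset.mem_union.1 hv
    · exact ⟨A, Finset.mem_insert_self A F, hvA⟩
    · obtain ⟨B, hB, hvB⟩ := hF.exists_mem v hvT
      exact ⟨B, Finset.mem_insert_of_mem hB, hvB⟩
  connected := by
    obtain ⟨v, hv⟩ := hAT
    obtain ⟨hvA, hvT⟩ := Finset.mem_inter.1 hv
    obtain ⟨B, hB, hvB⟩ := hF.exists_mem v hvT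
    rw [Finset.coe_insert]
    exact connected_induce_intersectionGraph_insert hF.connected hB
      ⟨v, Finset.mem_inter.2 ⟨hvA, hvB⟩⟩

end IsTripletCover

end TripletCover

section BreadthFirstSearch

variable {V : Type*} {G : SimpleGraph V} {r : V}

/-- `p` is a possible parent of `x` in a breadth-first search of `G` from `r`. A vertex may have
several parents; the root has none. -/
def IsBFSParent (G : SimpleGraph V) (r p x : V) : Prop :=
  G.Adj p x ∧ G.dist r p + 1 = G.dist r x

lemma IsBFSParent.ne_root {p x : V} (h : IsBFSParent G r p x) : x ≠ r := by
  rintro rfl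
  simpa using h.2

lemma exists_isBFSParent {x : V} (hG : G.Reachable r x) (hx : x ≠ r) :
    ∃ p, IsBFSParent G r p x := by
  obtain ⟨w, hw⟩ := hG.symm.exists_walk_length_eq_dist
  cases w with
  | nil => exact absurd rfl hx
  | @cons _ p _ hxp q =>
    refine ⟨p, hxp.symm, ?_⟩
    have hq : G.dist r p ≤ q.length := SimpleGraph.dist_comm (G := G) ▸ SimpleGraph.dist_le q
    have hdiff := hxp.diff_dist_adj (u := r)
    rw [SimpleGraph.Walk.length_cons, SimpleGraph.dist_comm] at hw
    omega

/-- `S` contains `r` and, with every other vertex, one of its parents in a breadth-first search from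
`r`; equivalently, `S` contains `r` and a shortest path of `G` from `r` to each of its vertices.
These are the vertex sets that remain when a search tree is pruned from the bottom. -/
structure IsBFSRooted (G : SimpleGraph V) (r : V) (S : Finset V) : Prop where
  root_mem : r ∈ S
  exists_parent : ∀ x ∈ S, x ≠ r → ∃ p ∈ S, IsBFSParent G r p x

namespace IsBFSRooted

lemma univ [Fintype V] (hG : G.Connected) (r : V) : IsBFSRooted G r Finset.univ where
  root_mem := Finset.mem_univ r
  exists_parent x _ hx := by simpa using exists_isBFSParent (hG r x) hx

variable {S : Finset V}

lemma isBFSParent_root_of_dist_le_one (hS : IsBFSRooted G r S) {x : V} (hx : x ∈ S) (hxr : x ≠ r)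
    (hdist : G.dist r x ≤ 1) : IsBFSParent G r r x := by
  obtain ⟨p, hp, hpx⟩ := hS.exists_parent x hx hxr
  obtain rfl : p = r := by
    by_contra hpr
    obtain ⟨q, -, hqp⟩ := hS.exists_parent p hp hpr
    have := hpx.2
    have := hqp.2
    omega
  exact hpx

lemma exists_deepest (hS : IsBFSRooted G r S) (hcard : 2 ≤ S.card) :
    ∃ v ∈ S, v ≠ r ∧ ∀ x ∈ S, G.dist r x ≤ G.dist r v := by
  obtain ⟨v, hv, hmax⟩ := S.exists_max_image (G.dist r) ⟨r, hS.root_mem⟩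
  obtain ⟨x, hx, hxr⟩ := Finset.exists_mem_ne hcard r
  obtain ⟨p, -, hpx⟩ := hS.exists_parent x hx hxr
  refine ⟨v, hv, ?_, hmax⟩
  rintro rfl
  have hdist : G.dist v x = 0 := by simpa only [SimpleGraph.dist_self, Nat.le_zero] using hmax x hx
  exact absurd (hpx.2.trans hdist) (Nat.succ_ne_zero _)

lemma parent_ne_root_of_unique_child (hS : IsBFSRooted G r S) (hcard : 3 ≤ S.card) {p v : V}
    (hv : IsBFSParent G r p v) (hunique : ∀ x ∈ S, IsBFSParent G r p x → x = v)
    (hmax : ∀ x ∈ S, G.dist r x ≤ G.dist r v) : p ≠ r := by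
  classical
  rintro rfl
  obtain ⟨x, hx, hxpv⟩ := Finset.exists_mem_notMem_of_card_lt_card
    (Finset.card_le_two.trans_lt hcard : ({p, v} : Finset V).card < S.card)
  obtain ⟨hxp, hxv⟩ : x ≠ p ∧ x ≠ v := by simpa using hxpv
  have hdist : G.dist p x ≤ 1 := by simpa [← hv.2] using hmax x hx
  exact hxv (hunique x hx (hS.isBFSParent_root_of_dist_le_one hx hxp hdist))

variable [DecidableEq V]

lemma isTriplet_of_card_eq_two (hS : IsBFSRooted G r S) (hcard : S.card = 2) :
    IsTriplet G S := by
  obtain ⟨x, hx, hxr⟩ := Finset.exists_mem_ne (by omega : 1 < S.card) r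
  have hSeq : {r, x} = S :=
    Finset.eq_of_subset_of_card_le (by simp [Finset.insert_subset_iff, hS.root_mem, hx])
      (by rw [hcard, Finset.card_pair hxr.symm])
  obtain ⟨p, hp, hpx⟩ := hS.exists_parent x hx hxr
  obtain rfl : p = r := by
    rw [← hSeq, Finset.mem_insert, Finset.mem_singleton] at hp
    exact hp.resolve_right hpx.1.ne
  simpa [hSeq] using isTriplet_of_adj_of_adj hpx.1 hpx.1

lemma sdiff {D : Finset V} (hS : IsBFSRooted G r S) (hr : r ∉ D)
    (hD : ∀ p ∈ D, ∀ x ∈ S, IsBFSParent G r p x → x ∈ D) : IsBFSRooted G r (S \ D) where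
  root_mem := Finset.mem_sdiff.2 ⟨hS.root_mem, hr⟩
  exists_parent x hx hxr := by
    obtain ⟨hxS, hxD⟩ := Finset.mem_sdiff.1 hx
    obtain ⟨p, hp, hpx⟩ := hS.exists_parent x hxS hxr
    exact ⟨p, Finset.mem_sdiff.2 ⟨hp, fun hpD => hxD (hD p hpD x hxS hpx)⟩, hpx⟩

lemma sdiff_siblings (hS : IsBFSRooted G r S) {p v w : V} (hv : IsBFSParent G r p v)
    (hw : IsBFSParent G r p w) (hmax : ∀ x ∈ S, G.dist r x ≤ G.dist r v) :
    IsBFSRooted G r (S \ {v, w}) := by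
  refine hS.sdiff (by simp [hv.ne_root.symm, hw.ne_root.symm]) fun u hu x hx hux => ?_
  have hdist : G.dist r u = G.dist r v := by
    obtain rfl | rfl : u = v ∨ u = w := by simpa using hu
    exacts [rfl, hw.2.symm.trans hv.2]
  have := hmax x hx
  have := hux.2
  omega

lemma sdiff_parent_of_unique_child (hS : IsBFSRooted G r S) {p v : V} (hv : IsBFSParent G r p v)
    (hpr : p ≠ r) (hunique : ∀ x ∈ S, IsBFSParent G r p x → x = v)
    (hmax : ∀ x ∈ S, G.dist r x ≤ G.dist r v) : IsBFSRooted G r (S \ {v, p}) := by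
  refine hS.sdiff (by simp [hv.ne_root.symm, hpr.symm]) fun u hu x hx hux => ?_
  obtain rfl | rfl : u = v ∨ u = p := by simpa using hu
  · have := hmax x hx
    have := hux.2
    omega
  · simp [hunique x hx hux]

lemma exists_isTriplet_sdiff (hS : IsBFSRooted G r S) (hcard : 3 ≤ S.card) :
    ∃ A D, IsTriplet G A ∧ A ⊆ S ∧ D ⊂ A ∧ D.card = 2 ∧ IsBFSRooted G r (S \ D) := by
  obtain ⟨v, hvS, hvr, hmax⟩ := hS.exists_deepest (by omega)
  obtain ⟨p, hpS, hpv⟩ := hS.exists_parent v hvS hvr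
  by_cases hsib : ∃ w ∈ S, IsBFSParent G r p w ∧ w ≠ v
  · obtain ⟨w, hwS, hpw, hwv⟩ := hsib
    refine ⟨{p, v, w}, {v, w}, isTriplet_of_adj_of_adj hpv.1 hpw.1, ?_, ?_,
      Finset.card_pair hwv.symm, hS.sdiff_siblings hpv hpw hmax⟩
    · simp [Finset.insert_subset_iff, hpS, hvS, hwS]
    · exact Finset.ssubset_insert (by simp [hpv.1.ne, hpw.1.ne])
  · have hunique : ∀ x ∈ S, IsBFSParent G r p x → x = v := by
      simpa using hsib
    have hpr := hS.parent_ne_root_of_unique_child hcard hpv hunique hmax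
    obtain ⟨q, hqS, hqp⟩ := hS.exists_parent p hpS hpr
    have hqv : q ≠ v := by
      rintro rfl
      have := hpv.2
      have := hqp.2
      omega
    refine ⟨{p, q, v}, {v, p}, isTriplet_of_adj_of_adj hqp.1.symm hpv.1, ?_, ?_,
      Finset.card_pair hpv.1.ne', hS.sdiff_parent_of_unique_child hpv hpr hunique hmax⟩
    · simp [Finset.insert_subset_iff, hpS, hqS, hvS]
    · rw [Finset.ssubset_iff]
      exact ⟨q, by simp [hqv, hqp.1.ne], by simp [Finset.insert_subset_iff]⟩

theorem exists_isTripletCover (hS : IsBFSRooted G r S) (hcard : 2 ≤ S.card) :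
    ∃ F, IsTripletCover G S F ∧ F.card ≤ S.card / 2 := by
  induction S using Finset.strongInduction with
  | H S ih =>
  obtain htwo | hthree : S.card = 2 ∨ 3 ≤ S.card := by omega
  · exact ⟨{S}, .singleton (hS.isTriplet_of_card_eq_two htwo), by simp [htwo]⟩
  obtain ⟨A, D, hA, hAS, hDA, hD, hrooted⟩ := hS.exists_isTriplet_sdiff hthree
  have hDS : D ⊆ S := hDA.subset.trans hAS
  have hsplit : (S \ D).card + 2 = S.card := hD ▸ Finset.card_sdiff_add_card_eq_card hDS
  have hDne : D.Nonempty := Finset.card_pos.1 (by omega)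
  by_cases hrest : 2 ≤ (S \ D).card
  · obtain ⟨F, hF, hFcard⟩ := ih (S \ D) (Finset.sdiff_ssubset hDS hDne) hrooted hrest
    obtain ⟨c, hcA, hcD⟩ := Finset.exists_of_ssubset hDA
    have hunion : A ∪ S \ D = S := by grind
    refine ⟨insert A F, hunion ▸ hF.insert hA ⟨c, by simp [hcA, hcD, hAS hcA]⟩, ?_⟩
    have := Finset.card_insert_le A F
    omega
  · have hAeq : A = S := Finset.eq_of_subset_of_card_le hAS (by
      have := Finset.card_lt_card hDA
      omega)
    exact ⟨{S}, .singleton (hAeq ▸ hA), by rw [Finset.card_singleton]; omega⟩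

end IsBFSRooted

end BreadthFirstSearch

theorem triplet_cover_of_tree_general {V : Type*} [Fintype V] [DecidableEq V] [Nontrivial V]
    {G : SimpleGraph V} (hG : G.Connected) :
    ∃ F : Finset (Finset V),
      (∀ S ∈ F, IsTriplet G S) ∧
      (∀ v : V, ∃ S ∈ F, v ∈ S) ∧
      (SimpleGraph.fromRel
        (fun S S' : {S // S ∈ F} => ((S : Finset V) ∩ (S' : Finset V)).Nonempty)).Connected ∧
      F.card ≤ Fintype.card V / 2 := by
  obtain ⟨r⟩ := hG.nonempty
  obtain ⟨F, hF, hcard⟩ := (IsBFSRooted.univ hG r).exists_isTripletCover Fintype.one_lt_card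
  exact ⟨F, hF.isTriplet, fun v => hF.exists_mem v (Finset.mem_univ v),
    induce_intersectionGraph (F : Set (Finset V)) ▸ hF.connected, hcard⟩

/-- For every tree `G` on `N ≥ 2` vertices with maximum degree at most 3 there is a
family `F` of triplets covering all vertices, whose intersection graph (distinct
members adjacent iff they intersect) is connected, with `|F| ≤ ⌊N/2⌋`. -/
theorem triplet_cover_of_tree
    {V : Type*} [Fintype V] [DecidableEq V] (N : ℕ)
    (hV : Fintype.card V = N) (hN : 2 ≤ N)
    (G : SimpleGraph V) [DecidableRel G.Adj]
    (htree : G.IsTree) (hdeg : ∀ v : V, G.degree v ≤ 3) :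
    ∃ F : Finset (Finset V),
      (∀ S ∈ F, IsTriplet G S) ∧
      (∀ v : V, ∃ S ∈ F, v ∈ S) ∧
      (SimpleGraph.fromRel
        (fun S S' : {S // S ∈ F} => ((S : Finset V) ∩ (S' : Finset V)).Nonempty)).Connected ∧
      F.card ≤ N / 2 := by
  have : Nontrivial V := Fintype.one_lt_card_iff_nontrivial.1 (hV ▸ hN)
  exact hV ▸ triplet_cover_of_tree_general htree.connected
end
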